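/- arXiv:1907.08064 — 2 statements merged into one kernel-verified Lean document; each statement's English description precedes it below -/
import Mathlib

section
/- Let k be a positive integer. For each pair (i,j) with 0 ≤ i, j ≤ k-1, let b^{i,j} : ℤ → ℝ be finitely supported functions (independent of q) satisfying b^{j,i}_m = b^{i,j}_{-m} for all m ∈ ℤ. For each positive integer q, let B̃(q) be the kq × kq real symmetric block matrix whose (i,j) q × q block has (m,l) entry b^{i,j}_{m-l}, and for ω ∈ [-π, π] let B(ω) be the k × k Hermitian matrix with (i,j) entry Σ_{m ∈ ℤ} b^{i,j}_m · e^{-i ω m}. Then, as q → ∞, λ_min(B̃(q)) converges to min_{ω ∈ [-π,π]} λ_min(B(ω)) and λ_max(B̃(q)) converges to max_{ω ∈ [-π,π]} λ_max(B(ω)). -/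
open Matrix

open scoped ComplexOrder in

lemma bt_herm_lower {𝕜 n : Type*} [RCLike 𝕜] [Fintype n] [DecidableEq n] (A : Matrix n n 𝕜)
    (hA : A.IsHermitian) (L : ℝ)
    (h : ∀ ν : ℝ, (∃ w : n → 𝕜, w ≠ 0 ∧ A.mulVec w = (ν : 𝕜) • w) → L ≤ ν) (w : n → 𝕜) :
    L * ∑ i, ‖w i‖ ^ 2 ≤ RCLike.re (star w ⬝ᵥ A *ᵥ w) := by
  have hB : (A - (L : 𝕜) • (1 : Matrix n n 𝕜)).IsHermitian := by
    apply hA.sub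
    simp [Matrix.IsHermitian, Matrix.conjTranspose_smul]
  have hP : (A - (L : 𝕜) • (1 : Matrix n n 𝕜)).PosSemidef := by
    rw [hB.posSemidef_iff_eigenvalues_nonneg]
    intro i
    have h1 := hB.mulVec_eigenvectorBasis i
    have := h (L + hB.eigenvalues i) ⟨(hB.eigenvectorBasis i).ofLp, ?_, ?_⟩
    · simpa using this
    · intro h0
      have h2 := hB.eigenvectorBasis.orthonormal.ne_zero i
      apply h2
      ext j
      exact congrFun h0 j
    · rw [Matrix.sub_mulVec, Matrix.smul_mulVec, Matrix.one_mulVec, sub_eq_iff_eq_add] at h1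
      rw [h1]
      ext j
      simp [Pi.add_apply, add_mul, RCLike.real_smul_eq_coe_mul]
      ring
  have := hP.re_dotProduct_nonneg w
  rw [Matrix.sub_mulVec, Matrix.smul_mulVec, Matrix.one_mulVec, dotProduct_sub, dotProduct_smul,
    map_sub, sub_nonneg] at this
  refine le_trans (le_of_eq ?_) this
  have : star w ⬝ᵥ w = ((∑ i, ‖w i‖ ^ 2 : ℝ) : 𝕜) := by
    simp [dotProduct, RCLike.conj_mul]
  rw [this, smul_eq_mul, ← RCLike.ofReal_mul, RCLike.ofReal_re]

lemma bt_count (n : ℤ) (q : ℕ) :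
    ((q : ℝ) - |(n : ℝ)| ≤ ∑ m : Fin q, ∑ l : Fin q, if (m : ℤ) - (l : ℤ) = n then (1 : ℝ) else 0) ∧
    (∑ m : Fin q, ∑ l : Fin q, if (m : ℤ) - (l : ℤ) = n then (1 : ℝ) else 0) ≤ q := by
  have e : (∑ m : Fin q, ∑ l : Fin q, if (m : ℤ) - (l : ℤ) = n then (1 : ℝ) else 0)
      = ((Finset.univ.filter (fun p : Fin q × Fin q => (p.1 : ℤ) - (p.2 : ℤ) = n)).card : ℝ) := by
    rw [← Fintype.sum_prod_type' (f := fun m l : Fin q => if (m : ℤ) - (l : ℤ) = n then (1 : ℝ) else 0)]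
    simp
  rw [e]
  constructor
  · have h : q - n.natAbs ≤ (Finset.univ.filter (fun p : Fin q × Fin q => (p.1 : ℤ) - (p.2 : ℤ) = n)).card := by
      rw [← Fintype.card_fin (q - n.natAbs), ← Finset.card_univ]
      refine Finset.card_le_card_of_injOn (fun t => (⟨t + n.toNat, by omega⟩, ⟨t + (-n).toNat, by omega⟩)) ?_ ?_
      · intro t _
        simp
      · intro s _ t _ hst
        simp at hst
        ext
        omega
    have h2 : (q : ℤ) - |n| ≤ ((Finset.univ.filter (fun p : Fin q × Fin q => (p.1 : ℤ) - (p.2 : ℤ) = n)).card : ℤ) := by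
      rw [Int.abs_eq_natAbs]
      omega
    exact_mod_cast h2
  · have h : (Finset.univ.filter (fun p : Fin q × Fin q => (p.1 : ℤ) - (p.2 : ℤ) = n)).card ≤ (Finset.univ : Finset (Fin q)).card := by
      refine Finset.card_le_card_of_injOn Prod.fst (by simp) ?_
      rintro ⟨a, c⟩ h1 ⟨a', c'⟩ h2 h3
      simp at h1 h2 h3 ⊢
      refine ⟨h3, ?_⟩
      subst h3
      ext
      omega
    simpa using h

lemma bt_count_lim (n : ℤ) : Filter.Tendsto (fun q : ℕ =>
    (∑ m : Fin q, ∑ l : Fin q, if (m : ℤ) - (l : ℤ) = n then (1 : ℝ) else 0) / q)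
    Filter.atTop (nhds 1) := by
  have h1 : Filter.Tendsto (fun q : ℕ => 1 - |(n : ℝ)| / (q : ℝ)) Filter.atTop (nhds 1) := by
    simpa using tendsto_const_nhds.sub (tendsto_const_div_atTop_nhds_zero_nat |(n : ℝ)|)
  refine tendsto_of_tendsto_of_tendsto_of_le_of_le' h1 tendsto_const_nhds ?_ ?_
  · filter_upwards [Filter.eventually_gt_atTop 0] with q hq
    have : (0 : ℝ) < q := by exact_mod_cast hq
    rw [le_div_iff₀ this, sub_mul, div_mul_cancel₀ _ this.ne', one_mul]
    exact (bt_count n q).1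
  · filter_upwards [Filter.eventually_gt_atTop 0] with q hq
    have : (0 : ℝ) < q := by exact_mod_cast hq
    rw [div_le_one this]
    exact (bt_count n q).2

lemma bt_toep_lim (S : Finset ℤ) (g : ℤ → ℂ) (hg : ∀ n, n ∉ S → g n = 0) :
    Filter.Tendsto (fun q : ℕ =>
    (∑ m : Fin q, ∑ l : Fin q, g ((m : ℤ) - (l : ℤ))) / (q : ℂ))
    Filter.atTop (nhds (∑ n ∈ S, g n)) := by
  have e : ∀ q : ℕ, (∑ m : Fin q, ∑ l : Fin q, g ((m : ℤ) - (l : ℤ))) / (q : ℂ) =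
      ∑ n ∈ S, g n * (((∑ m : Fin q, ∑ l : Fin q, if (m : ℤ) - (l : ℤ) = n then (1 : ℝ) else 0) / q : ℝ) : ℂ) := by
    intro q
    have : ∀ a : ℤ, g a = ∑ n ∈ S, g n * (if a = n then 1 else 0) := by
      intro a
      simp only [mul_ite, mul_one, mul_zero, Finset.sum_ite_eq]
      split_ifs with h
      · rfl
      · exact hg a h
    simp only [this ((_ : ℤ) - _)]
    push_cast
    simp only [← mul_div_assoc, ← Finset.sum_div, Finset.mul_sum]
    congr 1
    rw [Finset.sum_comm (s := S)]
    refine Finset.sum_congr rfl fun m _ => ?_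
    rw [Finset.sum_comm (s := S)]
    refine Finset.sum_congr rfl fun l _ => Finset.sum_congr rfl fun n _ => ?_
    split_ifs <;> simp
  simp only [e]
  have : ∑ n ∈ S, g n = ∑ n ∈ S, g n * ((1 : ℝ) : ℂ) := by simp
  rw [this]
  refine tendsto_finsetSum _ fun n _ => ?_
  exact tendsto_const_nhds.mul ((Complex.continuous_ofReal.tendsto _).comp (bt_count_lim n))

lemma bt_int (n : ℤ) : ∫ ω in (-Real.pi)..Real.pi, Complex.exp (Complex.I * ω * n) = if n = 0 then 2 * (Real.pi : ℂ) else 0 := by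
  split_ifs with h
  · subst h
    simp
    ring
  · have hc : (Complex.I * n) ≠ 0 := by simp [h]
    have := integral_exp_mul_complex (a := -Real.pi) (b := Real.pi) hc
    rw [show (fun ω : ℝ => Complex.exp (Complex.I * ω * n)) = fun ω : ℝ => Complex.exp (Complex.I * n * ω) by
      ext ω; ring_nf, this]
    have h2 : Complex.exp (Complex.I * n * Real.pi) = Complex.exp (Complex.I * n * (-Real.pi : ℝ)) := by
      rw [Complex.exp_eq_exp_iff_exists_int]
      exact ⟨n, by push_cast; ring⟩
    rw [h2]; simp

lemma bt_quad_int {q : ℕ} (S : Finset ℤ) (β : ℤ → ℂ) (hβ : ∀ n, n ∉ S → β n = 0)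
    (x y : Fin q → ℝ) :
    ∫ ω in (-Real.pi)..Real.pi,
      (star (∑ m : Fin q, (x m : ℂ) * Complex.exp (-Complex.I * (ω : ℂ) * (m : ℕ))) *
        ((∑ n ∈ S, β n * Complex.exp (-Complex.I * (ω : ℂ) * (n : ℂ))) *
          (∑ l : Fin q, (y l : ℂ) * Complex.exp (-Complex.I * (ω : ℂ) * (l : ℕ))))) =
    2 * Real.pi * ∑ m : Fin q, ∑ l : Fin q, (x m : ℂ) * (β ((m : ℤ) - (l : ℤ)) * (y l : ℂ)) := by
  have e : ∀ ω : ℝ, (star (∑ m : Fin q, (x m : ℂ) * Complex.exp (-Complex.I * (ω : ℂ) * (m : ℕ))) *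
        ((∑ n ∈ S, β n * Complex.exp (-Complex.I * (ω : ℂ) * (n : ℂ))) *
          (∑ l : Fin q, (y l : ℂ) * Complex.exp (-Complex.I * (ω : ℂ) * (l : ℕ))))) =
      ∑ m : Fin q, ∑ l : Fin q, ∑ n ∈ S, ((x m : ℂ) * (β n * (y l : ℂ))) *
        Complex.exp (Complex.I * (ω : ℂ) * (((m : ℤ) - (l : ℤ) - n : ℤ) : ℂ)) := by
    intro ω
    rw [star_sum, Finset.sum_mul]
    refine Finset.sum_congr rfl fun m _ => ?_
    rw [Finset.sum_mul_sum, Finset.sum_comm, Finset.mul_sum]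
    refine Finset.sum_congr rfl fun l _ => ?_
    rw [Finset.mul_sum]
    refine Finset.sum_congr rfl fun n _ => ?_
    have h1 : star ((x m : ℂ) * Complex.exp (-Complex.I * (ω : ℂ) * (m : ℕ))) =
        (x m : ℂ) * Complex.exp (Complex.I * (ω : ℂ) * (m : ℕ)) := by
      simp [← Complex.exp_conj]
    have h2 : Complex.exp (Complex.I * (ω : ℂ) * (((m : ℤ) - (l : ℤ) - n : ℤ) : ℂ)) =
        Complex.exp (Complex.I * (ω : ℂ) * (m : ℕ)) * Complex.exp (-Complex.I * (ω : ℂ) * (n : ℂ)) *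
        Complex.exp (-Complex.I * (ω : ℂ) * (l : ℕ)) := by
      rw [← Complex.exp_add, ← Complex.exp_add]
      congr 1
      push_cast
      ring
    rw [h1, h2]
    ring
  simp only [e]
  have hI : ∀ (c : ℂ) (n : ℤ), IntervalIntegrable (fun ω : ℝ => c * Complex.exp (Complex.I * (ω : ℂ) * (n : ℂ)))
      MeasureTheory.volume (-Real.pi) Real.pi := by
    intro c n
    apply Continuous.intervalIntegrable
    fun_prop
  rw [intervalIntegral.integral_finsetSum (fun m _ => by
    apply Continuous.intervalIntegrable; fun_prop), Finset.mul_sum]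
  refine Finset.sum_congr rfl fun m _ => ?_
  rw [intervalIntegral.integral_finsetSum (fun m _ => by
    apply Continuous.intervalIntegrable; fun_prop), Finset.mul_sum]
  refine Finset.sum_congr rfl fun l _ => ?_
  rw [intervalIntegral.integral_finsetSum (fun n _ => hI _ _)]
  simp only [intervalIntegral.integral_const_mul, bt_int]
  rw [Finset.sum_eq_single ((m : ℤ) - (l : ℤ))]
  · simp
    ring
  · intro n _ hn
    rw [if_neg (by omega)]
    simp
  · intro hn
    simp [hβ _ hn]

lemma bt_min
    (k : ℕ)
    (b : Fin k → Fin k → ℤ → ℝ)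
    (hfin : ∀ i j : Fin k, (Function.support (b i j)).Finite)
    (hsym : ∀ (i j : Fin k) (m : ℤ), b j i m = b i j (-m))
    (Bt : (q : ℕ) → Matrix (Fin k × Fin q) (Fin k × Fin q) ℝ)
    (hBt : ∀ (q : ℕ) (i j : Fin k) (m l : Fin q),
      Bt q (i, m) (j, l) = b i j ((m : ℤ) - (l : ℤ)))
    (Bom : ℝ → Matrix (Fin k) (Fin k) ℂ)
    (hBom : ∀ (ω : ℝ) (i j : Fin k),
      Bom ω i j = ∑ᶠ m : ℤ, (b i j m : ℂ) * Complex.exp (-(Complex.I) * (ω : ℂ) * (m : ℂ)))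
    (lmin : ℕ → ℝ)
    (hlmin : ∀ q : ℕ, 0 < q →
      (∃ v : Fin k × Fin q → ℝ, v ≠ 0 ∧ (Bt q).mulVec v = lmin q • v) ∧
      ∀ μ : ℝ, (∃ v : Fin k × Fin q → ℝ, v ≠ 0 ∧ (Bt q).mulVec v = μ • v) → lmin q ≤ μ)
    (Lmin : ℝ)
    (hLmin : (∃ ω ∈ Set.Icc (-Real.pi) Real.pi,
        ∃ w : Fin k → ℂ, w ≠ 0 ∧ (Bom ω).mulVec w = (Lmin : ℂ) • w) ∧
      ∀ ω ∈ Set.Icc (-Real.pi) Real.pi, ∀ ν : ℝ,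
        (∃ w : Fin k → ℂ, w ≠ 0 ∧ (Bom ω).mulVec w = (ν : ℂ) • w) → Lmin ≤ ν) :
    Filter.Tendsto lmin Filter.atTop (nhds Lmin) := by
  obtain ⟨S, hS⟩ : ∃ S : Finset ℤ, ∀ i j n, n ∉ S → b i j n = 0 := by
    refine ⟨Finset.univ.biUnion fun i => Finset.univ.biUnion fun j => (hfin i j).toFinset, ?_⟩
    intro i j n hn
    by_contra h
    apply hn
    simp only [Finset.mem_biUnion, Finset.mem_univ, true_and, Set.Finite.mem_toFinset]
    exact ⟨i, j, h⟩
  have hB : ∀ (ω : ℝ) (i j : Fin k),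
      Bom ω i j = ∑ n ∈ S, (b i j n : ℂ) * Complex.exp (-(Complex.I) * (ω : ℂ) * (n : ℂ)) := by
    intro ω i j
    rw [hBom]
    apply finsum_eq_sum_of_support_subset
    intro n hn
    by_contra h
    apply hn
    simp [hS i j n h]
  have hHerm : ∀ ω, (Bom ω).IsHermitian := by
    intro ω
    ext i j
    rw [Matrix.conjTranspose_apply, hBom, hBom]
    rw [← finsum_comp_equiv (Equiv.neg ℤ)]
    have : ∀ f : ℤ → ℂ, (Function.support f).Finite → star (∑ᶠ n, f n) = ∑ᶠ n, star (f n) := by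
      intro f hf
      exact AddMonoidHom.map_finsum (starAddEquiv (R := ℂ)).toAddMonoidHom hf
    rw [this]
    · refine finsum_congr fun n => ?_
      rw [hsym i j]
      simp [← Complex.exp_conj]
    · refine S.finite_toSet.preimage (f := fun n : ℤ => -n) (by intro a _ c _ h; simpa using h) |>.subset ?_
      intro n hn
      by_contra h
      apply hn
      have := hS j i (-n) h
      simp [this]
  have hSymm : ∀ q, (Bt q).IsHermitian := by
    intro q
    ext ⟨i, m⟩ ⟨j, l⟩
    rw [Matrix.conjTranspose_apply, hBt, hBt, hsym i j]
    simp
  have hlow : ∀ q, 0 < q → Lmin ≤ lmin q := by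
    intro q hq
    obtain ⟨⟨v, hv, hv2⟩, -⟩ := hlmin q hq
    set V : ℝ → Fin k → ℂ := fun ω j => ∑ l : Fin q, (v (j, l) : ℂ) * Complex.exp (-Complex.I * (ω : ℂ) * (l : ℕ)) with hV
    have hVc : ∀ j, Continuous fun ω => V ω j := by
      intro j
      simp only [hV]
      fun_prop
    have hBc : ∀ i j, Continuous fun ω => Bom ω i j := by
      intro i j
      simp only [hB]
      fun_prop
    have hFc : Continuous fun ω => star (V ω) ⬝ᵥ Bom ω *ᵥ V ω := by
      simp only [dotProduct, mulVec, Pi.star_apply]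
      fun_prop
    have hGc : Continuous fun ω => ∑ j, ‖V ω j‖ ^ 2 := by fun_prop
    have hF : ∫ ω in (-Real.pi)..Real.pi, (star (V ω) ⬝ᵥ Bom ω *ᵥ V ω) =
        ((2 * Real.pi * (v ⬝ᵥ Bt q *ᵥ v) : ℝ) : ℂ) := by
      simp only [dotProduct, mulVec, Pi.star_apply, Finset.mul_sum]
      rw [intervalIntegral.integral_finsetSum (fun m _ => by
        apply Continuous.intervalIntegrable; fun_prop)]
      rw [Fintype.sum_prod_type, Complex.ofReal_sum]
      refine Finset.sum_congr rfl fun i _ => ?_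
      rw [intervalIntegral.integral_finsetSum (fun m _ => by
        apply Continuous.intervalIntegrable; fun_prop)]
      simp only [Fintype.sum_prod_type]
      rw [Finset.sum_comm, Complex.ofReal_sum]
      refine Finset.sum_congr rfl fun j _ => ?_
      simp only [hV, hB]
      rw [bt_quad_int S (fun n => (b i j n : ℂ)) (by intro n hn; simp [hS i j n hn])
        (fun m => v (i, m)) (fun l => v (j, l))]
      simp only [hBt, Finset.mul_sum]
      push_cast
      rfl
    have hG : ∫ ω in (-Real.pi)..Real.pi, (∑ j, ‖V ω j‖ ^ 2) = 2 * Real.pi * (v ⬝ᵥ v) := by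
      apply Complex.ofReal_injective
      rw [← intervalIntegral.integral_ofReal]
      push_cast
      rw [intervalIntegral.integral_finsetSum (fun m _ => by
        apply Continuous.intervalIntegrable; fun_prop)]
      simp only [dotProduct, Fintype.sum_prod_type, Complex.ofReal_sum, Finset.mul_sum]
      refine Finset.sum_congr rfl fun j _ => ?_
      have := bt_quad_int {0} (fun n => if n = 0 then 1 else 0) (by intro n hn; simpa using hn)
        (fun m => v (j, m)) (fun l => v (j, l))
      rw [← Finset.mul_sum]
      convert this using 2
      · ext ω
        simp [hV, ← Complex.conj_mul']
      · refine Finset.sum_congr rfl fun m _ => ?_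
        rw [Finset.sum_eq_single m]
        · simp
        · intro l _ hl
          rw [if_neg]
          · simp
          · intro h
            apply hl
            ext
            omega
        · simp
    have hmono : ∫ ω in (-Real.pi)..Real.pi, (Lmin * ∑ j, ‖V ω j‖ ^ 2) ≤
        ∫ ω in (-Real.pi)..Real.pi, (star (V ω) ⬝ᵥ Bom ω *ᵥ V ω).re := by
      apply intervalIntegral.integral_mono_on (by linarith [Real.pi_pos])
      · apply Continuous.intervalIntegrable; fun_prop
      · apply Continuous.intervalIntegrable; exact Complex.continuous_re.comp hFc
      · intro ω hω
        exact bt_herm_lower (Bom ω) (hHerm ω) Lmin (fun ν h => hLmin.2 ω hω ν h) (V ω)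
    have hre : ∫ ω in (-Real.pi)..Real.pi, (star (V ω) ⬝ᵥ Bom ω *ᵥ V ω).re =
        2 * Real.pi * (v ⬝ᵥ Bt q *ᵥ v) := by
      have := Complex.reCLM.intervalIntegral_comp_comm (μ := MeasureTheory.volume)
        (a := -Real.pi) (b := Real.pi) (hFc.intervalIntegrable _ _)
      rw [hF] at this
      simpa only [Complex.reCLM_apply, Complex.ofReal_re] using this
    rw [intervalIntegral.integral_const_mul, hG, hre, hv2, dotProduct_smul, smul_eq_mul] at hmono
    have hpos : 0 < v ⬝ᵥ v := by
      refine lt_of_le_of_ne (by simp only [dotProduct]; exact Finset.sum_nonneg fun i _ => mul_self_nonneg _) ?_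
      intro h
      exact hv (dotProduct_self_eq_zero.1 h.symm)
    have hpp : 0 < 2 * Real.pi * (v ⬝ᵥ v) := by positivity
    refine le_of_mul_le_mul_right ?_ hpp
    linarith
  obtain ⟨⟨ω, hω, w, hw, hw2⟩, -⟩ := hLmin
  have hW : 0 < ∑ i, ‖w i‖ ^ 2 := by
    obtain ⟨i, hi⟩ := Function.ne_iff.1 hw
    refine Finset.sum_pos' (fun i _ => by positivity) ⟨i, Finset.mem_univ _, ?_⟩
    have : 0 < ‖w i‖ := norm_pos_iff.2 hi
    positivity
  set g : ℤ → ℂ := fun n => ∑ i, ∑ j, star (w i) * ((b i j n : ℂ) * Complex.exp (-(Complex.I) * (ω : ℂ) * (n : ℂ)) * w j) with hg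
  have hgS : ∀ n, n ∉ S → g n = 0 := by
    intro n hn
    simp [hg, hS _ _ n hn]
  have hsum : ∑ n ∈ S, g n = ((Lmin * ∑ i, ‖w i‖ ^ 2 : ℝ) : ℂ) := by
    have h1 : ∑ n ∈ S, g n = star w ⬝ᵥ Bom ω *ᵥ w := by
      simp only [hg, dotProduct, mulVec, hB, Pi.star_apply]
      rw [Finset.sum_comm]
      refine Finset.sum_congr rfl fun i _ => ?_
      rw [Finset.sum_comm, Finset.mul_sum]
      refine Finset.sum_congr rfl fun j _ => ?_
      rw [Finset.sum_mul, Finset.mul_sum]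
    rw [h1, hw2, dotProduct_smul]
    simp [dotProduct, Complex.conj_mul']
  have hlim := (Complex.continuous_re.tendsto _).comp (bt_toep_lim S g hgS)
  rw [hsum, Complex.ofReal_re] at hlim
  have hlim2 := hlim.div_const (∑ i, ‖w i‖ ^ 2)
  rw [mul_div_cancel_right₀ _ hW.ne'] at hlim2
  refine tendsto_of_tendsto_of_tendsto_of_le_of_le' tendsto_const_nhds hlim2 ?_ ?_
  · filter_upwards [Filter.eventually_gt_atTop 0] with q hq using hlow q hq
  · filter_upwards [Filter.eventually_gt_atTop 0] with q hq
    have hq' : (0 : ℝ) < q := by exact_mod_cast hq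
    set z : Fin k × Fin q → ℂ := fun p => w p.1 * Complex.exp (Complex.I * (ω : ℂ) * (p.2 : ℕ)) with hz
    have hr := bt_herm_lower (Bt q) (hSymm q) (lmin q) (fun ν h => (hlmin q hq).2 ν h) (fun p => (z p).re)
    have hi := bt_herm_lower (Bt q) (hSymm q) (lmin q) (fun ν h => (hlmin q hq).2 ν h) (fun p => (z p).im)
    have hzn : ∀ p, (z p).re ^ 2 + (z p).im ^ 2 = ‖w p.1‖ ^ 2 := by
      intro p
      have : ‖z p‖ = ‖w p.1‖ := by
        simp [hz, Complex.norm_exp]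
      rw [← this, Complex.sq_norm, Complex.normSq_apply]
      ring
    have hl : lmin q * (∑ p, ‖(z p).re‖ ^ 2) + lmin q * (∑ p, ‖(z p).im‖ ^ 2) =
        lmin q * (q * ∑ i, ‖w i‖ ^ 2) := by
      rw [← mul_add, ← Finset.sum_add_distrib]
      simp only [Real.norm_eq_abs, sq_abs, hzn, Fintype.sum_prod_type]
      simp [Finset.mul_sum]
    have hrr : (star (fun p => (z p).re) ⬝ᵥ Bt q *ᵥ (fun p => (z p).re)) +
        (star (fun p => (z p).im) ⬝ᵥ Bt q *ᵥ (fun p => (z p).im)) =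
        (∑ m : Fin q, ∑ l : Fin q, g ((m : ℤ) - (l : ℤ))).re := by
      have h1 : ∑ m : Fin q, ∑ l : Fin q, g ((m : ℤ) - (l : ℤ)) =
          ∑ p, ∑ r, star (z p) * ((Bt q p r : ℂ) * z r) := by
        simp only [hg, Fintype.sum_prod_type]
        conv_rhs => rw [Finset.sum_comm]
        refine Finset.sum_congr rfl fun m _ => ?_
        rw [Finset.sum_comm]
        refine Finset.sum_congr rfl fun i _ => ?_
        rw [Finset.sum_comm]
        refine Finset.sum_congr rfl fun j _ => Finset.sum_congr rfl fun l _ => ?_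
        have h2 : star (z (i, m)) = star (w i) * Complex.exp (-Complex.I * (ω : ℂ) * (m : ℕ)) := by
          simp [hz, ← Complex.exp_conj]
        have h3 : Complex.exp (-Complex.I * (ω : ℂ) * (((m : ℤ) - (l : ℤ) : ℤ) : ℂ)) =
            Complex.exp (-Complex.I * (ω : ℂ) * (m : ℕ)) * Complex.exp (Complex.I * (ω : ℂ) * (l : ℕ)) := by
          rw [← Complex.exp_add]
          congr 1
          push_cast
          ring
        rw [h2, h3, hBt]
        simp only [hz]
        ring
      rw [h1]
      simp only [Complex.re_sum, dotProduct, mulVec, ← Finset.sum_add_distrib, Finset.mul_sum]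
      refine Finset.sum_congr rfl fun p _ => Finset.sum_congr rfl fun r _ => ?_
      simp
    simp only [RCLike.re_to_real] at hr hi
    have hfinal : lmin q * (q * ∑ i, ‖w i‖ ^ 2) ≤ (∑ m : Fin q, ∑ l : Fin q, g ((m : ℤ) - (l : ℤ))).re := by
      rw [← hl, ← hrr]
      exact add_le_add hr hi
    rw [le_div_iff₀ hW]
    simp only [Function.comp]
    rw [Complex.div_natCast_re, le_div_iff₀ hq']
    linarith

/-- for fixed finitely supported symbol sequences `b^{i,j}`, the
smallest (resp. largest) eigenvalue of the `kq × kq` symmetric block-Toeplitz matrix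
`B̃(q)` converges, as `q → ∞`, to `min_{ω ∈ [-π,π]} λ_min(B(ω))`
(resp. `max_{ω ∈ [-π,π]} λ_max(B(ω))`), where `B(ω)` is the `k × k` Hermitian symbol
matrix with `(i,j)` entry `Σ_{m ∈ ℤ} b^{i,j}_m e^{-iωm}`. -/
theorem block_toeplitz_extreme_eigenvalue_limits
    (k : ℕ) (hk : 0 < k)
    (b : Fin k → Fin k → ℤ → ℝ)
    (hfin : ∀ i j : Fin k, (Function.support (b i j)).Finite)
    (hsym : ∀ (i j : Fin k) (m : ℤ), b j i m = b i j (-m))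
    (Bt : (q : ℕ) → Matrix (Fin k × Fin q) (Fin k × Fin q) ℝ)
    (hBt : ∀ (q : ℕ) (i j : Fin k) (m l : Fin q),
      Bt q (i, m) (j, l) = b i j ((m : ℤ) - (l : ℤ)))
    (Bom : ℝ → Matrix (Fin k) (Fin k) ℂ)
    (hBom : ∀ (ω : ℝ) (i j : Fin k),
      Bom ω i j = ∑ᶠ m : ℤ, (b i j m : ℂ) * Complex.exp (-(Complex.I) * (ω : ℂ) * (m : ℂ)))
    (lmin lmax : ℕ → ℝ)
    -- `lmin q` is the smallest eigenvalue of `B̃(q)`: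
    (hlmin : ∀ q : ℕ, 0 < q →
      (∃ v : Fin k × Fin q → ℝ, v ≠ 0 ∧ (Bt q).mulVec v = lmin q • v) ∧
      ∀ μ : ℝ, (∃ v : Fin k × Fin q → ℝ, v ≠ 0 ∧ (Bt q).mulVec v = μ • v) → lmin q ≤ μ)
    -- `lmax q` is the largest eigenvalue of `B̃(q)`:
    (hlmax : ∀ q : ℕ, 0 < q →
      (∃ v : Fin k × Fin q → ℝ, v ≠ 0 ∧ (Bt q).mulVec v = lmax q • v) ∧
      ∀ μ : ℝ, (∃ v : Fin k × Fin q → ℝ, v ≠ 0 ∧ (Bt q).mulVec v = μ • v) → μ ≤ lmax q)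
    (Lmin Lmax : ℝ)
    -- `Lmin = min_{ω ∈ [-π,π]} λ_min(B(ω))`:
    (hLmin : (∃ ω ∈ Set.Icc (-Real.pi) Real.pi,
        ∃ w : Fin k → ℂ, w ≠ 0 ∧ (Bom ω).mulVec w = (Lmin : ℂ) • w) ∧
      ∀ ω ∈ Set.Icc (-Real.pi) Real.pi, ∀ ν : ℝ,
        (∃ w : Fin k → ℂ, w ≠ 0 ∧ (Bom ω).mulVec w = (ν : ℂ) • w) → Lmin ≤ ν)
    -- `Lmax = max_{ω ∈ [-π,π]} λ_max(B(ω))`: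
    (hLmax : (∃ ω ∈ Set.Icc (-Real.pi) Real.pi,
        ∃ w : Fin k → ℂ, w ≠ 0 ∧ (Bom ω).mulVec w = (Lmax : ℂ) • w) ∧
      ∀ ω ∈ Set.Icc (-Real.pi) Real.pi, ∀ ν : ℝ,
        (∃ w : Fin k → ℂ, w ≠ 0 ∧ (Bom ω).mulVec w = (ν : ℂ) • w) → ν ≤ Lmax) :
    Filter.Tendsto lmin Filter.atTop (nhds Lmin) ∧
    Filter.Tendsto lmax Filter.atTop (nhds Lmax) := by
  refine ⟨bt_min k b hfin hsym Bt hBt Bom hBom lmin hlmin Lmin hLmin, ?_⟩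
  have key := bt_min k (fun i j m => - b i j m)
    (by intro i j; simpa [Function.support] using hfin i j)
    (by intro i j m; simp [hsym i j m]) (fun q => - Bt q)
    (by intro q i j m l; simp [hBt]) (fun ω => - Bom ω)
    (by intro ω i j; simp [hBom, finsum_neg_distrib]) (fun q => - lmax q) ?_ (- Lmax) ?_
  · simpa using key.neg
  · intro q hq
    obtain ⟨⟨v, hv, hv2⟩, h2⟩ := hlmax q hq
    refine ⟨⟨v, hv, by rw [Matrix.neg_mulVec, hv2, neg_smul]⟩, ?_⟩
    rintro μ ⟨u, hu, hu2⟩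
    have := h2 (-μ) ⟨u, hu, by rw [neg_smul, ← hu2, Matrix.neg_mulVec, neg_neg]⟩
    linarith
  · obtain ⟨⟨ω, hω, v, hv, hv2⟩, h2⟩ := hLmax
    refine ⟨⟨ω, hω, v, hv, by rw [Matrix.neg_mulVec, hv2, Complex.ofReal_neg, neg_smul]⟩, ?_⟩
    rintro ω hω μ ⟨u, hu, hu2⟩
    have := h2 ω hω (-μ) ⟨u, hu, by
      rw [Complex.ofReal_neg, neg_smul, ← hu2, Matrix.neg_mulVec, neg_neg]⟩
    linarith
end

section
/- With G̃ (depending on q) and G_I(e^{iω}) as defined, for every subset I ⊆ {0,...,n-1} with |I| = k: as q → ∞, λ_min(G̃_I · G̃_Iᵀ) converges to min_{ω ∈ [-π,π]} λ_min(G_I(e^{iω}) · G_I(e^{iω})*) and λ_max(G̃_I · G̃_Iᵀ) converges to max_{ω ∈ [-π,π]} λ_max(G_I(e^{iω}) · G_I(e^{iω})*), where λ_min and λ_max denote smallest and largest eigenvalues and * denotes conjugate transpose. -/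
open Matrix

open scoped ComplexOrder in
lemma rayleigh_lower {𝕜 ι : Type*} [RCLike 𝕜] [Fintype ι] [DecidableEq ι] (A : Matrix ι ι 𝕜)
    (hA : A.IsHermitian) (c : ℝ)
    (h : ∀ μ : ℝ, (∃ v : ι → 𝕜, v ≠ 0 ∧ A *ᵥ v = (μ : 𝕜) • v) → c ≤ μ) (x : ι → 𝕜) :
    c * RCLike.re (star x ⬝ᵥ x) ≤ RCLike.re (star x ⬝ᵥ (A *ᵥ x)) := by
  have hH : (A - (c : 𝕜) • (1 : Matrix ι ι 𝕜)).IsHermitian := by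
    refine hA.sub ?_
    simp [Matrix.IsHermitian, Matrix.conjTranspose_smul]
  have hP : (A - (c : 𝕜) • (1 : Matrix ι ι 𝕜)).PosSemidef := by
    rw [hH.posSemidef_iff_eigenvalues_nonneg]
    intro i
    have h1 := hH.mulVec_eigenvectorBasis i
    have h2 : (WithLp.ofLp (hH.eigenvectorBasis i) : ι → 𝕜) ≠ 0 := by
      intro h0
      have := hH.eigenvectorBasis.orthonormal.ne_zero i
      exact this (by ext j; simpa using congrFun h0 j)
    have := h (hH.eigenvalues i + c) ⟨_, h2, by
      rw [sub_mulVec, sub_eq_iff_eq_add] at h1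
      rw [h1]
      rw [smul_mulVec, one_mulVec, RCLike.ofReal_add, add_smul]
      congr 1
      ext j
      simp only [Pi.smul_apply, RCLike.real_smul_eq_coe_mul, smul_eq_mul]⟩
    simpa using this
  have := hP.dotProduct_mulVec_nonneg x
  rw [sub_mulVec, dotProduct_sub, smul_mulVec, one_mulVec, dotProduct_smul, smul_eq_mul] at this
  have h3 := (RCLike.nonneg_iff.mp this).1
  rw [map_sub, RCLike.re_ofReal_mul] at h3
  linarith

lemma rayleigh_upper {𝕜 ι : Type*} [RCLike 𝕜] [Fintype ι] [DecidableEq ι] (A : Matrix ι ι 𝕜)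
    (hA : A.IsHermitian) (c : ℝ)
    (h : ∀ μ : ℝ, (∃ v : ι → 𝕜, v ≠ 0 ∧ A *ᵥ v = (μ : 𝕜) • v) → μ ≤ c) (x : ι → 𝕜) :
    RCLike.re (star x ⬝ᵥ (A *ᵥ x)) ≤ c * RCLike.re (star x ⬝ᵥ x) := by
  have := rayleigh_lower (-A) hA.neg (-c) (by
    rintro μ ⟨v, hv, e⟩
    have := h (-μ) ⟨v, hv, by
      rw [neg_mulVec] at e
      rw [← neg_neg (A *ᵥ v), e]; simp⟩
    linarith) x
  simpa [neg_mulVec] using this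

lemma exp_integral (d : ℤ) :
    ∫ ω in (-Real.pi)..Real.pi, Complex.exp (Complex.I * d * ω) =
      if d = 0 then ((2 * Real.pi : ℝ) : ℂ) else 0 := by
  split_ifs with hd
  · subst hd; simp; ring
  · rw [integral_exp_mul_complex (by simp [hd])]
    have : Complex.exp (Complex.I * d * Real.pi) = Complex.exp (Complex.I * d * (-Real.pi : ℝ)) := by
      rw [Complex.exp_eq_exp_iff_exists_int]
      exact ⟨d, by push_cast; ring⟩
    rw [this]; simp

lemma parseval (n : ℕ) (y : Fin n → ℝ) :
    ∫ ω in (-Real.pi)..Real.pi, ‖∑ c, (y c : ℂ) * Complex.exp (-Complex.I * ω * (c : ℕ))‖ ^ 2 =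
      2 * Real.pi * ∑ c, y c ^ 2 := by
  have key : ∀ ω : ℝ, ((‖∑ c, (y c : ℂ) * Complex.exp (-Complex.I * ω * (c : ℕ))‖ ^ 2 : ℝ) : ℂ)
      = ∑ c : Fin n, ∑ c' : Fin n, ((y c : ℂ) * y c') *
        Complex.exp (Complex.I * (((c : ℕ) : ℤ) - ((c' : ℕ) : ℤ) : ℤ) * ω) := by
    intro ω
    push_cast
    rw [← Complex.conj_mul', map_sum, Finset.sum_mul_sum]
    refine Finset.sum_congr rfl fun c _ => Finset.sum_congr rfl fun c' _ => ?_
    rw [map_mul, ← Complex.exp_conj]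
    simp only [map_mul, map_neg, Complex.conj_I, Complex.conj_ofReal, map_natCast]
    rw [mul_mul_mul_comm, ← Complex.exp_add]
    congr 2
    push_cast; ring
  apply Complex.ofReal_injective
  rw [← intervalIntegral.integral_ofReal]
  simp_rw [key]
  have hi : ∀ c c' : Fin n, IntervalIntegrable (fun ω : ℝ => ((y c : ℂ) * y c') *
        Complex.exp (Complex.I * (((c : ℕ) : ℤ) - ((c' : ℕ) : ℤ) : ℤ) * ω)) MeasureTheory.volume
        (-Real.pi) Real.pi := fun c c' => by
    apply Continuous.intervalIntegrable; fun_prop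
  rw [intervalIntegral.integral_finsetSum
    (fun c _ => by apply Continuous.intervalIntegrable; fun_prop)]
  simp_rw [intervalIntegral.integral_finsetSum (fun c' _ => hi _ c'),
    intervalIntegral.integral_const_mul, exp_integral, sub_eq_zero]
  push_cast
  rw [Finset.mul_sum]
  refine Finset.sum_congr rfl fun c _ => ?_
  rw [Finset.sum_eq_single c]
  · simp; ring
  · intro b _ hb
    rw [if_neg]; simp
    intro h; apply hb; ext; exact_mod_cast h.symm
  · simp

/-- generic block column -/
noncomputable def colP {k : ℕ} (ρ : Fin k → ℝ) (σ : Fin k → ℕ) (K q : ℕ) :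
    Matrix (Fin k × Fin q) (Fin (q + K)) ℝ :=
  fun p c => ρ p.1 * if (c : ℕ) = σ p.1 + (p.2 : ℕ) then 1 else 0

/-- generic symbol column applied to a vector -/
noncomputable def symH {k : ℕ} (ρ : Fin k → ℝ) (σ : Fin k → ℕ) (ω : ℝ) (w : Fin k → ℂ) : ℂ :=
  ∑ i, (ρ i : ℂ) * Complex.exp (-Complex.I * ω * (σ i : ℕ)) * w i

/-- Fourier transform of a vector -/
noncomputable def FT {k q : ℕ} (x : Fin k × Fin q → ℝ) (ω : ℝ) (i : Fin k) : ℂ :=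
  ∑ m : Fin q, (x (i, m) : ℂ) * Complex.exp (-Complex.I * ω * (m : ℕ))

lemma ft_col {k : ℕ} (ρ : Fin k → ℝ) (σ : Fin k → ℕ) (K q : ℕ) (hσ : ∀ i, σ i ≤ K)
    (x : Fin k × Fin q → ℝ) (ω : ℝ) :
    ∑ c, (((colP ρ σ K q)ᵀ *ᵥ x) c : ℂ) * Complex.exp (-Complex.I * ω * (c : ℕ)) =
      symH ρ σ ω (FT x ω) := by
  simp only [Matrix.mulVec, dotProduct, Matrix.transpose_apply, symH, FT, colP]
  push_cast
  simp_rw [Finset.sum_mul]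
  rw [Finset.sum_comm, Fintype.sum_prod_type]
  refine Finset.sum_congr rfl fun i _ => ?_
  rw [Finset.mul_sum]
  refine Finset.sum_congr rfl fun m _ => ?_
  rw [Finset.sum_eq_single (⟨σ i + m, by have := hσ i; omega⟩ : Fin (q + K))]
  · simp only [if_true]
    push_cast
    rw [mul_add, Complex.exp_add]; ring
  · intro c _ hc
    rw [if_neg]; simp
    intro h; apply hc; ext; exact h
  · simp

lemma quad_col {α β : Type*} [Fintype α] [Fintype β] (P : Matrix α β ℝ) (x : α → ℝ) :
    x ⬝ᵥ ((P * Pᵀ) *ᵥ x) = ∑ c, (Pᵀ *ᵥ x) c ^ 2 := by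
  rw [← Matrix.mulVec_mulVec, Matrix.dotProduct_mulVec, ← Matrix.mulVec_transpose]
  simp [dotProduct, sq]

lemma quad_int {k : ℕ} (ρ : Fin k → ℝ) (σ : Fin k → ℕ) (K q : ℕ) (hσ : ∀ i, σ i ≤ K)
    (x : Fin k × Fin q → ℝ) :
    ∫ ω in (-Real.pi)..Real.pi, ‖symH ρ σ ω (FT x ω)‖ ^ 2 =
      2 * Real.pi * (x ⬝ᵥ ((colP ρ σ K q * (colP ρ σ K q)ᵀ) *ᵥ x)) := by
  rw [quad_col, ← parseval]
  simp_rw [ft_col ρ σ K q hσ x]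

lemma norm_int {k q : ℕ} (x : Fin k × Fin q → ℝ) :
    ∫ ω in (-Real.pi)..Real.pi, ∑ i, ‖FT x ω i‖ ^ 2 = 2 * Real.pi * (x ⬝ᵥ x) := by
  rw [intervalIntegral.integral_finsetSum
    (fun c _ => by apply Continuous.intervalIntegrable; unfold FT; fun_prop)]
  simp only [FT, dotProduct, Fintype.sum_prod_type, Finset.mul_sum]
  refine Finset.sum_congr rfl fun i _ => ?_
  rw [parseval, Finset.mul_sum]
  simp [sq]

section core
variable {k : ℕ} {ι : Type*} (I : Finset ι) (ρ : ι → Fin k → ℝ) (σ : ι → Fin k → ℕ) (K : ι → ℕ)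

lemma quad_int_sum (hσ : ∀ l i, σ l i ≤ K l) (q : ℕ) (x : Fin k × Fin q → ℝ) :
    ∫ ω in (-Real.pi)..Real.pi, ∑ l ∈ I, ‖symH (ρ l) (σ l) ω (FT x ω)‖ ^ 2 =
      2 * Real.pi *
        (x ⬝ᵥ ((∑ l ∈ I, colP (ρ l) (σ l) (K l) q * (colP (ρ l) (σ l) (K l) q)ᵀ) *ᵥ x)) := by
  rw [intervalIntegral.integral_finsetSum
    (fun c _ => by apply Continuous.intervalIntegrable; unfold symH FT; fun_prop)]
  rw [Matrix.sum_mulVec, dotProduct_sum, Finset.mul_sum]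
  exact Finset.sum_congr rfl fun l _ => quad_int _ _ _ _ (hσ l) _

lemma quad_lower (hσ : ∀ l i, σ l i ≤ K l) (q : ℕ) (x : Fin k × Fin q → ℝ) (L : ℝ)
    (h : ∀ ω ∈ Set.Icc (-Real.pi) Real.pi, ∀ w : Fin k → ℂ,
      L * ∑ i, ‖w i‖ ^ 2 ≤ ∑ l ∈ I, ‖symH (ρ l) (σ l) ω w‖ ^ 2) :
    L * (x ⬝ᵥ x) ≤
      x ⬝ᵥ ((∑ l ∈ I, colP (ρ l) (σ l) (K l) q * (colP (ρ l) (σ l) (K l) q)ᵀ) *ᵥ x) := by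
  have hpi := Real.pi_pos
  have := intervalIntegral.integral_mono_on (a := -Real.pi) (b := Real.pi)
    (μ := MeasureTheory.volume) (by linarith)
    (f := fun ω => L * ∑ i, ‖FT x ω i‖ ^ 2)
    (g := fun ω => ∑ l ∈ I, ‖symH (ρ l) (σ l) ω (FT x ω)‖ ^ 2)
    (by apply Continuous.intervalIntegrable; unfold FT; fun_prop)
    (by apply Continuous.intervalIntegrable; unfold symH FT; fun_prop)
    (fun ω hω => h ω hω _)
  rw [intervalIntegral.integral_const_mul, norm_int, quad_int_sum I ρ σ K hσ] at this
  nlinarith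

lemma quad_upper (hσ : ∀ l i, σ l i ≤ K l) (q : ℕ) (x : Fin k × Fin q → ℝ) (L : ℝ)
    (h : ∀ ω ∈ Set.Icc (-Real.pi) Real.pi, ∀ w : Fin k → ℂ,
      ∑ l ∈ I, ‖symH (ρ l) (σ l) ω w‖ ^ 2 ≤ L * ∑ i, ‖w i‖ ^ 2) :
      x ⬝ᵥ ((∑ l ∈ I, colP (ρ l) (σ l) (K l) q * (colP (ρ l) (σ l) (K l) q)ᵀ) *ᵥ x) ≤
    L * (x ⬝ᵥ x) := by
  have hpi := Real.pi_pos
  have := intervalIntegral.integral_mono_on (a := -Real.pi) (b := Real.pi)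
    (μ := MeasureTheory.volume) (by linarith)
    (g := fun ω => L * ∑ i, ‖FT x ω i‖ ^ 2)
    (f := fun ω => ∑ l ∈ I, ‖symH (ρ l) (σ l) ω (FT x ω)‖ ^ 2)
    (by apply Continuous.intervalIntegrable; unfold symH FT; fun_prop)
    (by apply Continuous.intervalIntegrable; unfold FT; fun_prop)
    (fun ω hω => h ω hω _)
  rw [intervalIntegral.integral_const_mul, norm_int, quad_int_sum I ρ σ K hσ] at this
  nlinarith

end core

lemma inner_sum_aux (q σ c : ℕ) (ω : ℝ) :
    (∑ m : Fin q, (if c = σ + (m : ℕ) then (1 : ℂ) else 0) * Complex.exp (Complex.I * ω * (m : ℕ))) =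
      if σ ≤ c ∧ c < σ + q then
        Complex.exp (Complex.I * ω * c) * Complex.exp (-Complex.I * ω * σ) else 0 := by
  split_ifs with h
  · rw [Finset.sum_eq_single (⟨c - σ, by omega⟩ : Fin q)]
    · rw [if_pos (by simp; omega), one_mul, ← Complex.exp_add]
      congr 1
      simp only [Nat.cast_sub h.1]
      ring
    · intro m _ hm
      rw [if_neg, zero_mul]
      intro h'; apply hm; ext; simp; omega
    · simp
  · refine Finset.sum_eq_zero fun m _ => ?_
    rw [if_neg, zero_mul]
    omega

/-- test vector -/
noncomputable def tv {k : ℕ} (w : Fin k → ℂ) (ω : ℝ) (q : ℕ) (p : Fin k × Fin q) : ℂ :=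
  w p.1 * Complex.exp (Complex.I * ω * (p.2 : ℕ))

lemma exp_norm_one (ω : ℝ) (c : ℕ) : ‖Complex.exp (Complex.I * ω * c)‖ = 1 := by
  rw [Complex.norm_exp]; simp

lemma exp_norm_one' (ω : ℝ) (c : ℕ) : ‖Complex.exp (-Complex.I * ω * c)‖ = 1 := by
  rw [Complex.norm_exp]; simp

lemma tv_norm {k : ℕ} (w : Fin k → ℂ) (ω : ℝ) (q : ℕ) :
    ((fun p => (tv w ω q p).re) ⬝ᵥ (fun p => (tv w ω q p).re)) +
    ((fun p => (tv w ω q p).im) ⬝ᵥ (fun p => (tv w ω q p).im)) = q * ∑ i, ‖w i‖ ^ 2 := by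
  simp only [dotProduct, ← Finset.sum_add_distrib]
  have : ∀ p, (tv w ω q p).re * (tv w ω q p).re + (tv w ω q p).im * (tv w ω q p).im
      = ‖w p.1‖ ^ 2 := by
    intro p
    rw [← Complex.normSq_apply, Complex.normSq_eq_norm_sq, tv, norm_mul, exp_norm_one, mul_one]
  simp_rw [this]
  rw [Fintype.sum_prod_type]
  simp [Finset.mul_sum]

lemma tv_col {k : ℕ} (ρ : Fin k → ℝ) (σ : Fin k → ℕ) (K q : ℕ) (w : Fin k → ℂ) (ω : ℝ)
    (c : Fin (q + K)) :
    ((colP ρ σ K q)ᵀ *ᵥ (fun p => (tv w ω q p).re)) c ^ 2 +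
    ((colP ρ σ K q)ᵀ *ᵥ (fun p => (tv w ω q p).im)) c ^ 2 =
      ‖∑ i, (ρ i : ℂ) * w i * (if σ i ≤ c ∧ (c : ℕ) < σ i + q then
        Complex.exp (Complex.I * ω * (c : ℕ)) * Complex.exp (-Complex.I * ω * σ i) else 0)‖ ^ 2 := by
  have : (∑ i, (ρ i : ℂ) * w i * (if σ i ≤ c ∧ (c : ℕ) < σ i + q then
        Complex.exp (Complex.I * ω * (c : ℕ)) * Complex.exp (-Complex.I * ω * σ i) else 0)) =
      ∑ p, ((colP ρ σ K q p c : ℝ) : ℂ) * tv w ω q p := by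
    rw [Fintype.sum_prod_type]
    refine Finset.sum_congr rfl fun i _ => ?_
    rw [← inner_sum_aux, Finset.mul_sum]
    refine Finset.sum_congr rfl fun m _ => ?_
    simp only [colP, tv]
    split_ifs <;> push_cast <;> ring
  rw [this, ← Complex.normSq_eq_norm_sq, Complex.normSq_apply, Complex.re_sum, Complex.im_sum]
  simp [Matrix.mulVec, dotProduct, sq]

lemma test_col {k : ℕ} (ρ : Fin k → ℝ) (σ : Fin k → ℕ) (K : ℕ) (hσ : ∀ i, σ i ≤ K)
    (w : Fin k → ℂ) (ω : ℝ) : ∃ C : ℝ, ∀ q : ℕ,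
    |(∑ c, (((colP ρ σ K q)ᵀ *ᵥ (fun p => (tv w ω q p).re)) c ^ 2 +
      ((colP ρ σ K q)ᵀ *ᵥ (fun p => (tv w ω q p).im)) c ^ 2)) - q * ‖symH ρ σ ω w‖ ^ 2| ≤ C := by
  set M : ℝ := ∑ i, ‖(ρ i : ℂ) * w i‖ with hM
  have hM0 : 0 ≤ M := Finset.sum_nonneg fun i _ => norm_nonneg _
  have hS : ‖symH ρ σ ω w‖ ≤ M := by
    refine (norm_sum_le _ _).trans (Finset.sum_le_sum fun i _ => ?_)
    rw [norm_mul, norm_mul, exp_norm_one', norm_mul, mul_one]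
  set g := ‖symH ρ σ ω w‖ ^ 2 with hg
  have hgM : g ≤ M ^ 2 := by rw [hg]; gcongr
  have hg0 : 0 ≤ g := by positivity
  refine ⟨3 * K * M ^ 2, fun q => ?_⟩
  simp_rw [tv_col]
  set Y : ℕ → ℂ := fun c => ∑ i, (ρ i : ℂ) * w i * (if σ i ≤ c ∧ (c : ℕ) < σ i + q then
        Complex.exp (Complex.I * ω * (c : ℕ)) * Complex.exp (-Complex.I * ω * σ i) else 0) with hY
  have hYM : ∀ c, ‖Y c‖ ≤ M := by
    intro c
    refine (norm_sum_le _ _).trans (Finset.sum_le_sum fun i _ => ?_)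
    rw [norm_mul]
    refine mul_le_of_le_one_right (norm_nonneg _) ?_
    split_ifs
    · rw [norm_mul, exp_norm_one, exp_norm_one', mul_one]
    · simp
  have hYg : ∀ c, K ≤ c → c < q → ‖Y c‖ ^ 2 = g := by
    intro c h1 h2
    have : Y c = Complex.exp (Complex.I * ω * (c : ℕ)) * symH ρ σ ω w := by
      simp only [hY, symH, Finset.mul_sum]
      refine Finset.sum_congr rfl fun i _ => ?_
      have := hσ i
      rw [if_pos ⟨by omega, by omega⟩]
      ring
    rw [this, norm_mul, exp_norm_one, one_mul]
  have hterm : ∀ c, |‖Y c‖ ^ 2 - g| ≤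
      M ^ 2 * ((if c < K then 1 else 0) + (if q ≤ c then 1 else 0)) := by
    intro c
    have h1 : |‖Y c‖ ^ 2 - g| ≤ M ^ 2 := by
      have : ‖Y c‖ ^ 2 ≤ M ^ 2 := by have := hYM c; gcongr
      have : 0 ≤ ‖Y c‖ ^ 2 := by positivity
      rw [abs_le]; constructor <;> linarith
    have : 0 ≤ M ^ 2 := by positivity
    split_ifs with h2 h3 h3
    · linarith
    · linarith
    · linarith
    · rw [hYg c (by omega) (by omega)]; simp
  rw [Fin.sum_univ_eq_sum_range (fun c => ‖Y c‖ ^ 2)]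
  have e : ∑ c ∈ Finset.range (q + K), ‖Y c‖ ^ 2 - q * g =
      ∑ c ∈ Finset.range (q + K), (‖Y c‖ ^ 2 - g) + K * g := by
    rw [Finset.sum_sub_distrib]; simp; ring
  have c1 : ∑ c ∈ Finset.range (q + K), (if c < K then (1 : ℝ) else 0) = K := by
    rw [add_comm, Finset.sum_range_add]
    rw [Finset.sum_congr rfl (g := fun _ => (1 : ℝ)) (fun c hc => if_pos (Finset.mem_range.mp hc))]
    simp
  have c2 : ∑ c ∈ Finset.range (q + K), (if q ≤ c then (1 : ℝ) else 0) = K := by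
    rw [Finset.sum_range_add]
    rw [Finset.sum_congr rfl (g := fun _ => (0 : ℝ))
      (fun c hc => if_neg (by simpa using hc))]
    simp
  rw [e]
  calc _ ≤ ∑ c ∈ Finset.range (q + K), |‖Y c‖ ^ 2 - g| + K * g := by
        refine (abs_add_le _ _).trans ?_
        rw [abs_of_nonneg (show 0 ≤ (K : ℝ) * g by positivity)]
        gcongr
        exact Finset.abs_sum_le_sum_abs _ _
    _ ≤ ∑ c ∈ Finset.range (q + K),
        M ^ 2 * ((if c < K then (1 : ℝ) else 0) + (if q ≤ c then 1 else 0)) + K * M ^ 2 := by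
        gcongr with c
        exact hterm c
    _ = 3 * K * M ^ 2 := by
        rw [← Finset.mul_sum, Finset.sum_add_distrib, c1, c2]; ring

lemma test_sum {k : ℕ} {ι : Type*} (I : Finset ι) (ρ : ι → Fin k → ℝ) (σ : ι → Fin k → ℕ)
    (K : ι → ℕ) (hσ : ∀ l i, σ l i ≤ K l) (w : Fin k → ℂ) (ω : ℝ) : ∃ C : ℝ, ∀ q : ℕ,
    |((fun p => (tv w ω q p).re) ⬝ᵥ
      ((∑ l ∈ I, colP (ρ l) (σ l) (K l) q * (colP (ρ l) (σ l) (K l) q)ᵀ) *ᵥ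
        (fun p => (tv w ω q p).re)) +
      (fun p => (tv w ω q p).im) ⬝ᵥ
      ((∑ l ∈ I, colP (ρ l) (σ l) (K l) q * (colP (ρ l) (σ l) (K l) q)ᵀ) *ᵥ
        (fun p => (tv w ω q p).im))) - q * ∑ l ∈ I, ‖symH (ρ l) (σ l) ω w‖ ^ 2| ≤ C := by
  choose C hC using fun l => test_col (ρ l) (σ l) (K l) (hσ l) w ω
  refine ⟨∑ l ∈ I, C l, fun q => ?_⟩
  rw [Matrix.sum_mulVec, dotProduct_sum, Matrix.sum_mulVec, dotProduct_sum,
    ← Finset.sum_add_distrib, Finset.mul_sum, ← Finset.sum_sub_distrib]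
  refine (Finset.abs_sum_le_sum_abs _ _).trans (Finset.sum_le_sum fun l _ => ?_)
  rw [quad_col, quad_col, ← Finset.sum_add_distrib]
  exact hC l q

lemma squeeze_aux (u : ℕ → ℝ) (L C W : ℝ) (hW : 0 < W)
    (h1 : ∀ q, 0 < q → 0 ≤ u q - L) (h2 : ∀ q : ℕ, 0 < q → (u q - L) * (q * W) ≤ C) :
    Filter.Tendsto u Filter.atTop (nhds L) := by
  have h3 : Filter.Tendsto (fun q : ℕ => L + (C / W) / q) Filter.atTop (nhds (L + 0)) :=
    tendsto_const_nhds.add (tendsto_const_div_atTop_nhds_zero_nat _)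
  rw [add_zero] at h3
  refine tendsto_of_tendsto_of_tendsto_of_le_of_le' tendsto_const_nhds h3 ?_ ?_
  · filter_upwards [Filter.eventually_gt_atTop 0] with q hq
    linarith [h1 q hq]
  · filter_upwards [Filter.eventually_gt_atTop 0] with q hq
    have := h2 q hq
    have hq' : (0 : ℝ) < q := by exact_mod_cast hq
    rw [← sub_le_iff_le_add', div_div, le_div_iff₀ (by positivity)]
    linarith

lemma re_star_dot {k : ℕ} (w : Fin k → ℂ) : RCLike.re (star w ⬝ᵥ w) = ∑ i, ‖w i‖ ^ 2 := by
  simp only [dotProduct, map_sum, Pi.star_apply]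
  refine Finset.sum_congr rfl fun i _ => ?_
  rw [RCLike.star_def, RCLike.conj_mul]
  norm_cast

lemma re_quad {k : ℕ} (G : Matrix (Fin k) (Fin k) ℂ) (w : Fin k → ℂ) :
    RCLike.re (star w ⬝ᵥ ((G * Gᴴ) *ᵥ w)) = ∑ i, ‖(Gᴴ *ᵥ w) i‖ ^ 2 := by
  rw [← re_star_dot, ← Matrix.mulVec_mulVec, Matrix.dotProduct_mulVec, star_mulVec,
    conjTranspose_conjTranspose]

/-- core of the theorem -/
lemma core_thm {k : ℕ} {ι : Type*} (I : Finset ι) (ρ : ι → Fin k → ℝ) (σ : ι → Fin k → ℕ)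
    (K : ι → ℕ) (hσ : ∀ l i, σ l i ≤ K l)
    (B : (q : ℕ) → Matrix (Fin k × Fin q) (Fin k × Fin q) ℝ)
    (hB : ∀ q, B q = ∑ l ∈ I, colP (ρ l) (σ l) (K l) q * (colP (ρ l) (σ l) (K l) q)ᵀ)
    (G : ℝ → Matrix (Fin k) (Fin k) ℂ)
    (hG : ∀ ω w, ∑ i, ‖((G ω)ᴴ *ᵥ w) i‖ ^ 2 = ∑ l ∈ I, ‖symH (ρ l) (σ l) ω w‖ ^ 2)
    (lmin lmax : ℕ → ℝ)
    (hlmin : ∀ q : ℕ, 0 < q →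
      (∃ v : Fin k × Fin q → ℝ, v ≠ 0 ∧ (B q).mulVec v = lmin q • v) ∧
      ∀ μ : ℝ, (∃ v : Fin k × Fin q → ℝ, v ≠ 0 ∧ (B q).mulVec v = μ • v) → lmin q ≤ μ)
    (hlmax : ∀ q : ℕ, 0 < q →
      (∃ v : Fin k × Fin q → ℝ, v ≠ 0 ∧ (B q).mulVec v = lmax q • v) ∧
      ∀ μ : ℝ, (∃ v : Fin k × Fin q → ℝ, v ≠ 0 ∧ (B q).mulVec v = μ • v) → μ ≤ lmax q)
    (Lmin Lmax : ℝ)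
    (hLmin : (∃ ω ∈ Set.Icc (-Real.pi) Real.pi, ∃ w : Fin k → ℂ, w ≠ 0 ∧
        (G ω * (G ω)ᴴ).mulVec w = (Lmin : ℂ) • w) ∧
      ∀ ω ∈ Set.Icc (-Real.pi) Real.pi, ∀ ν : ℝ,
        (∃ w : Fin k → ℂ, w ≠ 0 ∧ (G ω * (G ω)ᴴ).mulVec w = (ν : ℂ) • w) →
          Lmin ≤ ν)
    (hLmax : (∃ ω ∈ Set.Icc (-Real.pi) Real.pi, ∃ w : Fin k → ℂ, w ≠ 0 ∧
        (G ω * (G ω)ᴴ).mulVec w = (Lmax : ℂ) • w) ∧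
      ∀ ω ∈ Set.Icc (-Real.pi) Real.pi, ∀ ν : ℝ,
        (∃ w : Fin k → ℂ, w ≠ 0 ∧ (G ω * (G ω)ᴴ).mulVec w = (ν : ℂ) • w) →
          ν ≤ Lmax) :
    Filter.Tendsto lmin Filter.atTop (nhds Lmin) ∧
    Filter.Tendsto lmax Filter.atTop (nhds Lmax) := by
  have hH : ∀ ω, (G ω * (G ω)ᴴ).IsHermitian := fun ω => Matrix.isHermitian_mul_conjTranspose_self _
  have hBH : ∀ q, (B q).IsHermitian := by
    intro q
    rw [hB, Matrix.IsHermitian, Matrix.conjTranspose_sum]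
    refine Finset.sum_congr rfl fun l _ => ?_
    simp [Matrix.conjTranspose_mul, Matrix.conjTranspose_eq_transpose_of_trivial]
  have low : ∀ ω ∈ Set.Icc (-Real.pi) Real.pi, ∀ w : Fin k → ℂ,
      Lmin * ∑ i, ‖w i‖ ^ 2 ≤ ∑ l ∈ I, ‖symH (ρ l) (σ l) ω w‖ ^ 2 := by
    intro ω hω w
    have := rayleigh_lower _ (hH ω) Lmin (hLmin.2 ω hω) w
    rwa [re_star_dot, re_quad, hG] at this
  have upp : ∀ ω ∈ Set.Icc (-Real.pi) Real.pi, ∀ w : Fin k → ℂ,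
      ∑ l ∈ I, ‖symH (ρ l) (σ l) ω w‖ ^ 2 ≤ Lmax * ∑ i, ‖w i‖ ^ 2 := by
    intro ω hω w
    have := rayleigh_upper _ (hH ω) Lmax (hLmax.2 ω hω) w
    rwa [re_star_dot, re_quad, hG] at this
  have eig : ∀ ω L (w : Fin k → ℂ), (G ω * (G ω)ᴴ).mulVec w = ((L : ℝ) : ℂ) • w →
      ∑ l ∈ I, ‖symH (ρ l) (σ l) ω w‖ ^ 2 = L * ∑ i, ‖w i‖ ^ 2 := by
    intro ω L w h
    rw [← hG, ← re_quad, h, dotProduct_smul, ← re_star_dot, smul_eq_mul]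
    exact RCLike.re_ofReal_mul _ _
  have wpos : ∀ w : Fin k → ℂ, w ≠ 0 → 0 < ∑ i, ‖w i‖ ^ 2 := by
    intro w hw
    obtain ⟨i, hi⟩ := Function.ne_iff.mp hw
    refine Finset.sum_pos' (fun i _ => by positivity) ⟨i, Finset.mem_univ _, ?_⟩
    have : 0 < ‖w i‖ := norm_pos_iff.mpr hi
    positivity
  have vpos : ∀ q (v : Fin k × Fin q → ℝ), v ≠ 0 → 0 < v ⬝ᵥ v := by
    intro q v hv
    have h0 : 0 ≤ v ⬝ᵥ v := Finset.sum_nonneg fun i _ => mul_self_nonneg _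
    exact lt_of_le_of_ne h0 (fun h => hv (dotProduct_self_eq_zero.mp h.symm))
  constructor
  · obtain ⟨ω, hω, w, hw, hwe⟩ := hLmin.1
    obtain ⟨C, hC⟩ := test_sum I ρ σ K hσ w ω
    refine squeeze_aux lmin Lmin C _ (wpos w hw) ?_ ?_
    · intro q hq
      obtain ⟨v, hv, hve⟩ := (hlmin q hq).1
      have h1 := quad_lower I ρ σ K hσ q v Lmin low
      rw [← hB, hve, dotProduct_smul, smul_eq_mul] at h1
      exact sub_nonneg.mpr (le_of_mul_le_mul_right h1 (vpos q v hv))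
    · intro q hq
      have h1 := rayleigh_lower _ (hBH q) (lmin q) (fun μ h => (hlmin q hq).2 μ h)
      have hr := h1 (fun p => (tv w ω q p).re)
      have hi := h1 (fun p => (tv w ω q p).im)
      simp only [star_trivial, RCLike.re_to_real] at hr hi
      have hn := tv_norm w ω q
      have hc := (abs_le.mp (hC q)).2
      rw [← hB, eig ω Lmin w hwe] at hc
      rw [sub_mul, ← hn, mul_add]
      rw [← mul_assoc, mul_comm (q : ℝ), mul_assoc, ← hn] at hc
      linarith
  · obtain ⟨ω, hω, w, hw, hwe⟩ := hLmax.1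
    obtain ⟨C, hC⟩ := test_sum I ρ σ K hσ w ω
    have := squeeze_aux (fun q => - lmax q) (-Lmax) C _ (wpos w hw) ?_ ?_
    · simpa using this.neg
    · intro q hq
      obtain ⟨v, hv, hve⟩ := (hlmax q hq).1
      have h1 := quad_upper I ρ σ K hσ q v Lmax upp
      rw [← hB, hve, dotProduct_smul, smul_eq_mul] at h1
      have := (le_of_mul_le_mul_right h1 (vpos q v hv))
      linarith
    · intro q hq
      have h1 := rayleigh_upper _ (hBH q) (lmax q) (fun μ h => (hlmax q hq).2 μ h)
      have hr := h1 (fun p => (tv w ω q p).re)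
      have hi := h1 (fun p => (tv w ω q p).im)
      simp only [star_trivial, RCLike.re_to_real] at hr hi
      have hn := tv_norm w ω q
      have hc := (abs_le.mp (hC q)).1
      rw [← hB, eig ω Lmax w hwe] at hc
      rw [sub_mul, ← hn, neg_mul, neg_mul, mul_add]
      rw [← mul_assoc (q : ℝ), mul_comm (q : ℝ), mul_assoc, ← hn] at hc
      linarith

/-- as `q → ∞`, the smallest eigenvalue of `G̃_I·G̃_Iᵀ` converges to
`min_{ω ∈ [-π,π]} λ_min(G_I(e^{iω})·G_I(e^{iω})*)` and the largest eigenvalue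
converges to `max_{ω ∈ [-π,π]} λ_max(G_I(e^{iω})·G_I(e^{iω})*)`. -/
theorem gram_of_GI_extreme_eigenvalue_limits
    (k s : ℕ) (hk : 0 < k) (hs : 0 < s)
    (a : Fin s → ℕ) (b : Fin k → ℕ) (ha : StrictMono a) (hb : StrictMono b)
    (r : Fin k → Fin s → ℝ)
    (Gmsg : (q : ℕ) → Fin k → Matrix (Fin k × Fin q) (Fin q) ℝ)
    (hGmsg : ∀ (q : ℕ) (ℓ : Fin k) (i : Fin k) (m : Fin q) (c : Fin q),
      Gmsg q ℓ (i, m) c = if i = ℓ ∧ m = c then 1 else 0)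
    (Gpar : (q : ℕ) → (j : Fin s) →
      Matrix (Fin k × Fin q) (Fin (q + a j * b ⟨k - 1, by omega⟩)) ℝ)
    (hGpar : ∀ (q : ℕ) (j : Fin s) (i : Fin k) (m : Fin q)
        (c : Fin (q + a j * b ⟨k - 1, by omega⟩)),
      Gpar q j (i, m) c = r i j * (if (c : ℕ) = a j * b i + (m : ℕ) then 1 else 0))
    (I : Finset (Fin (k + s))) (hI : I.card = k)
    -- `B q = G̃_I · G̃_Iᵀ` for block size `q`:
    (B : (q : ℕ) → Matrix (Fin k × Fin q) (Fin k × Fin q) ℝ)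
    (hB : ∀ q : ℕ, B q = ∑ ℓ ∈ I,
      if hℓ : (ℓ : ℕ) < k
        then Gmsg q ⟨(ℓ : ℕ), hℓ⟩ * (Gmsg q ⟨(ℓ : ℕ), hℓ⟩)ᵀ
        else (fun P => P * Pᵀ) (Gpar q ⟨(ℓ : ℕ) - k, by have := ℓ.isLt; omega⟩))
    -- `GIom ω = G_I(e^{iω})`, the columns of `G(D)` indexed by `I` with `D = e^{iω}`:
    (GIom : ℝ → Matrix (Fin k) (Fin k) ℂ)
    (hGIom : ∀ (ω : ℝ) (i c : Fin k),
      GIom ω i c =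
        if hcol : ((I.orderEmbOfFin hI c : Fin (k + s)) : ℕ) < k
          then (if (i : ℕ) = ((I.orderEmbOfFin hI c : Fin (k + s)) : ℕ) then 1 else 0)
          else ((r i ⟨((I.orderEmbOfFin hI c : Fin (k + s)) : ℕ) - k,
              by have := (I.orderEmbOfFin hI c).isLt; omega⟩ : ℝ) : ℂ) *
            Complex.exp (Complex.I * (ω : ℂ) *
              ((a ⟨((I.orderEmbOfFin hI c : Fin (k + s)) : ℕ) - k,
                  by have := (I.orderEmbOfFin hI c).isLt; omega⟩ * b i : ℕ) : ℂ)))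
    (lmin lmax : ℕ → ℝ)
    -- `lmin q` / `lmax q` are the smallest / largest eigenvalues of `G̃_I·G̃_Iᵀ`:
    (hlmin : ∀ q : ℕ, 0 < q →
      (∃ v : Fin k × Fin q → ℝ, v ≠ 0 ∧ (B q).mulVec v = lmin q • v) ∧
      ∀ μ : ℝ, (∃ v : Fin k × Fin q → ℝ, v ≠ 0 ∧ (B q).mulVec v = μ • v) → lmin q ≤ μ)
    (hlmax : ∀ q : ℕ, 0 < q →
      (∃ v : Fin k × Fin q → ℝ, v ≠ 0 ∧ (B q).mulVec v = lmax q • v) ∧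
      ∀ μ : ℝ, (∃ v : Fin k × Fin q → ℝ, v ≠ 0 ∧ (B q).mulVec v = μ • v) → μ ≤ lmax q)
    (Lmin Lmax : ℝ)
    -- `Lmin = min_{ω ∈ [-π,π]} λ_min(G_I(e^{iω})·G_I(e^{iω})*)`:
    (hLmin : (∃ ω ∈ Set.Icc (-Real.pi) Real.pi, ∃ w : Fin k → ℂ, w ≠ 0 ∧
        (GIom ω * (GIom ω)ᴴ).mulVec w = (Lmin : ℂ) • w) ∧
      ∀ ω ∈ Set.Icc (-Real.pi) Real.pi, ∀ ν : ℝ,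
        (∃ w : Fin k → ℂ, w ≠ 0 ∧ (GIom ω * (GIom ω)ᴴ).mulVec w = (ν : ℂ) • w) →
          Lmin ≤ ν)
    -- `Lmax = max_{ω ∈ [-π,π]} λ_max(G_I(e^{iω})·G_I(e^{iω})*)`:
    (hLmax : (∃ ω ∈ Set.Icc (-Real.pi) Real.pi, ∃ w : Fin k → ℂ, w ≠ 0 ∧
        (GIom ω * (GIom ω)ᴴ).mulVec w = (Lmax : ℂ) • w) ∧
      ∀ ω ∈ Set.Icc (-Real.pi) Real.pi, ∀ ν : ℝ,
        (∃ w : Fin k → ℂ, w ≠ 0 ∧ (GIom ω * (GIom ω)ᴴ).mulVec w = (ν : ℂ) • w) →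
          ν ≤ Lmax) :
    Filter.Tendsto lmin Filter.atTop (nhds Lmin) ∧
    Filter.Tendsto lmax Filter.atTop (nhds Lmax) := by
  classical
  let ρ : Fin (k + s) → Fin k → ℝ := fun l i =>
    if hl : (l : ℕ) < k then (if (i : ℕ) = (l : ℕ) then 1 else 0)
    else r i ⟨(l : ℕ) - k, by have := l.isLt; omega⟩
  let σ : Fin (k + s) → Fin k → ℕ := fun l i =>
    if hl : (l : ℕ) < k then 0 else a ⟨(l : ℕ) - k, by have := l.isLt; omega⟩ * b i
  let K : Fin (k + s) → ℕ := fun l =>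
    if hl : (l : ℕ) < k then 0
    else a ⟨(l : ℕ) - k, by have := l.isLt; omega⟩ * b ⟨k - 1, by omega⟩
  refine core_thm I ρ σ K ?_ B ?_ GIom ?_ lmin lmax hlmin hlmax Lmin Lmax hLmin hLmax
  · intro l i
    simp only [σ, K]
    split_ifs
    · exact le_rfl
    · refine Nat.mul_le_mul_left _ (hb.monotone ?_)
      rw [Fin.le_def]; simp; omega
  · intro q
    rw [hB q]
    refine Finset.sum_congr rfl fun l _ => ?_
    split_ifs with hl
    · have hK : K l = 0 := by simp [K, hl]
      rw [hK]
      congr 1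
      · ext ⟨i, m⟩ c
        rw [hGmsg]
        simp [colP, ρ, σ, hl, Fin.ext_iff, ← ite_and, eq_comm, and_comm]
      · ext c ⟨i, m⟩
        simp only [Matrix.transpose_apply]
        rw [hGmsg]
        simp [colP, ρ, σ, hl, Fin.ext_iff, ← ite_and, eq_comm, and_comm]
    · have hK : K l = a ⟨(l : ℕ) - k, by have := l.isLt; omega⟩ * b ⟨k - 1, by omega⟩ := by
        simp [K, hl]
      rw [hK]
      have : Gpar q ⟨(l : ℕ) - k, by have := l.isLt; omega⟩ = colP (ρ l) (σ l) _ q := by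
        ext ⟨i, m⟩ c
        rw [hGpar]
        simp [colP, ρ, σ, hl]
      simp only [this]
  · intro ω w
    have hI' : I = Finset.univ.map (I.orderEmbOfFin hI).toEmbedding := by simp
    conv_rhs => rw [hI']
    rw [Finset.sum_map]
    refine Finset.sum_congr rfl fun c _ => ?_
    congr 2
    simp only [Matrix.mulVec, dotProduct, Matrix.conjTranspose_apply, symH]
    refine Finset.sum_congr rfl fun i _ => ?_
    congr 1
    rw [hGIom]
    by_cases hl : ((I.orderEmbOfFin hI c : Fin (k + s)) : ℕ) < k
    · simp only [ρ, σ, RelEmbedding.coe_toEmbedding, hl, dif_pos]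
      split_ifs <;> simp
    · simp only [ρ, σ, RelEmbedding.coe_toEmbedding, hl, dif_neg, not_false_eq_true]
      rw [RCLike.star_def, map_mul, ← Complex.exp_conj]
      simp only [map_mul, Complex.conj_I, Complex.conj_ofReal, map_natCast]
end
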